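/- Suppose F(x) = f(x) + P₁(x) − P₂(x) is level-bounded and the function E(x, y, w) = f(x) + P₁(x) − ⟨x, y⟩ + P₂*(y) + (L/2)‖x − w‖² is a KL function with exponent 1/2. Let {x^k} and {ξ^k} be the sequences generated by pDCA_e for minimizing F and let ζ = lim_{k→∞} E(x^k, ξ^k, x^{k−1}). Then the sequence {E(x^{k+1}, ξ^{k+1}, x^k)} converges R-linearly to ζ, and {x^k} converges R-linearly to a stationary point of F; in particular, for all sufficiently large k, E(x^{k+1}, ξ^{k+1}, x^k) − ζ ≤ C·(E(x^{k−1}, ξ^{k−1}, x^{k−2}) − E(x^{k+1}, ξ^{k+1}, x^k)) for some constant C > 0. -/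

import Mathlib

/-!
The proof follows the potential `E` along the triples `(x^k, ξ^k, x^{k-1})`, where it is real-valued
because `ξ^k ∈ ∂P₂(x^{k-1})` turns `P₂*(ξ^k)` into `⟪x^{k-1}, ξ^k⟫ - P₂(x^{k-1})` (`potVal`).

* Sufficient decrease (`potVal_descent`): the optimality condition of the proximal subproblem
  (`subgrad_of_prox_min`), the descent lemma and convexity of `f` and `P₂` give
  `E_{k+1} ≤ E_k - D ‖x^k - x^{k-1}‖²` with `D = L/2 (1 - B²)`, `B` a bound for the `β_k`.
  As `F(x^k) ≤ E_k`, level-boundedness bounds the iterates, so `E_k` decreases to a limit `ζ` and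
  the steps tend to `0`.
* Relative error (`mem_limSubdiff_potE3`, `subgrad_norm_sq_le`): `∂E` at the `k`-th triple contains
  a vector whose squared norm is at most a constant times
  `‖x^k - x^{k-1}‖² + ‖x^{k-1} - x^{k-2}‖²`.
* Cluster points (`cluster_point`): if `(xbar, ybar)` is a cluster point of `(x^k, ξ^k)`, then `xbar`
  is stationary and `E(xbar, ybar, xbar) = ζ`.

The KL inequality with exponent `1/2` at a cluster point turns the relative error into
`E_k - ζ ≤ c (‖x^k - x^{k-1}‖² + ‖x^{k-1} - x^{k-2}‖²)` near that point (`kl_local_bound`). A single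
constant serves for all large `k`: otherwise a subsequence violating the bound with constants tending
to infinity would have a cluster point, contradicting the local bound there. With the sufficient
decrease this is `E_{k+1} - ζ ≤ C (E_{k-1} - E_{k+1})`, a two-step contraction of the excess.
Hence `E_k - ζ` and then the step lengths decay geometrically (`geometric_rate`), so `x^k` is a Cauchy
sequence that converges R-linearly, and its limit is stationary because it is a cluster point.
-/

open Filter Topology Set Metric Bornology
open scoped RealInnerProductSpace

noncomputable section

abbrev Eucl (n : ℕ) := EuclideanSpace ℝ (Fin n)

variable {H : Type*} [NormedAddCommGroup H] [InnerProductSpace ℝ H]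

/-- Fréchet (regular) subgradient of an extended-real-valued function. -/
def FrechetSubgradAt (h : H → EReal) (v x : H) : Prop :=
  ∀ ε : ℝ, 0 < ε →
    ∀ᶠ y in 𝓝[≠] x, h x + ((⟪v, y - x⟫ - ε * ‖y - x‖ : ℝ) : EReal) ≤ h y

/-- Limiting (Mordukhovich) subdifferential. -/
def limSubdiff (h : H → EReal) (x : H) : Set H :=
  {v | ∃ xs vs : ℕ → H,
    Tendsto xs atTop (𝓝 x) ∧
    Tendsto (fun k => h (xs k)) atTop (𝓝 (h x)) ∧
    Tendsto vs atTop (𝓝 v) ∧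
    ∀ k, FrechetSubgradAt h (vs k) (xs k)}

/-- Convex subgradient of a real-valued function. -/
def ConvexSubgradAt (g : H → ℝ) (v x : H) : Prop :=
  ∀ y, g x + ⟪v, y - x⟫ ≤ g y

/-- Convex subgradient of an extended-real-valued function. -/
def ConvexSubgradAtE (g : H → EReal) (v x : H) : Prop :=
  ∀ y, g x + ((⟪v, y - x⟫ : ℝ) : EReal) ≤ g y

/-- Convex conjugate of a real-valued function. -/
def conjE (g : H → ℝ) (y : H) : EReal :=
  ⨆ x : H, ((⟪x, y⟫ - g x : ℝ) : EReal)

/-- `P` is proper, closed (lsc) and convex. -/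
def ProperClosedConvexE (P : H → EReal) : Prop :=
  (∀ x, P x ≠ ⊥) ∧ (∃ x, P x ≠ ⊤) ∧ LowerSemicontinuous P ∧
  (∀ x y : H, ∀ t : ℝ, t ∈ Ioo (0:ℝ) 1 →
    P (t • x + (1 - t) • y) ≤ (t : EReal) * P x + ((1 - t : ℝ) : EReal) * P y)

/-- KL property with exponent `α` at a point. -/
def KLExpAt (h : H → EReal) (α : ℝ) (x₀ : H) : Prop :=
  ∃ c > (0:ℝ), ∃ ε > (0:ℝ), ∃ a > (0:ℝ), ∀ x : H,
    ‖x - x₀‖ ≤ ε → h x₀ < h x → h x < h x₀ + (a : EReal) →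
    (limSubdiff h x).Nonempty →
    1 ≤ c * (1 - α) * ((h x).toReal - (h x₀).toReal) ^ (-α) * infDist 0 (limSubdiff h x)

/-- KL function with exponent `α`. -/
def IsKLWithExp (h : H → EReal) (α : ℝ) : Prop :=
  ∀ x₀ : H, (limSubdiff h x₀).Nonempty → KLExpAt h α x₀

/-- KL property (general desingularizing function) at a point. -/
def KLAt (h : H → EReal) (x₀ : H) : Prop :=
  ∃ a > (0:ℝ), ∃ U ∈ 𝓝 x₀, ∃ φ φd : ℝ → ℝ,
    ContinuousOn φ (Ico 0 a) ∧ ConcaveOn ℝ (Ico 0 a) φ ∧ φ 0 = 0 ∧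
    (∀ s ∈ Ico (0:ℝ) a, 0 ≤ φ s) ∧
    (∀ s ∈ Ioo (0:ℝ) a, HasDerivAt φ (φd s) s ∧ 0 < φd s) ∧
    ∀ x ∈ U, h x₀ < h x → h x < h x₀ + (a : EReal) → (limSubdiff h x).Nonempty →
      1 ≤ φd ((h x).toReal - (h x₀).toReal) * infDist 0 (limSubdiff h x)

/-- KL function. -/
def IsKLFun (h : H → EReal) : Prop :=
  ∀ x₀ : H, (limSubdiff h x₀).Nonempty → KLAt h x₀

/-- The potential function `E(x,y,w) = f(x) + P₁(x) - ⟨x,y⟩ + P₂*(y) + L/2 ‖x-w‖²`. -/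
def potE (f : H → ℝ) (P₁ : H → EReal) (P₂ : H → ℝ) (L : ℝ) (x y w : H) : EReal :=
  ((f x : ℝ) : EReal) + P₁ x - ((⟪x, y⟫ : ℝ) : EReal) + conjE P₂ y
    + ((L / 2 * ‖x - w‖ ^ 2 : ℝ) : EReal)

/-- The pDCAe iteration: `ξ^{k+1} ∈ ∂P₂(x^k)`, `u^k = x^k + β_k (x^k - x^{k-1})` and
`x^{k+1}` is the minimizer of `⟨∇f(u^k) - ξ^{k+1}, ·⟩ + L/2 ‖· - u^k‖² + P₁(·)`.
(`x⁻¹ = x⁰` is encoded by truncated subtraction in `ℕ`.) -/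
def IsPDCAe (f' : H → H) (P₁ : H → EReal) (P₂ : H → ℝ) (L : ℝ) (β : ℕ → ℝ)
    (x ξ : ℕ → H) : Prop :=
  P₁ (x 0) ≠ ⊤ ∧
  (∀ k : ℕ, ConvexSubgradAt P₂ (ξ (k + 1)) (x k)) ∧
  (∀ k : ℕ, ∀ z : H,
    ((⟪f' (x k + β k • (x k - x (k - 1))) - ξ (k + 1), x (k + 1)⟫
        + L / 2 * ‖x (k + 1) - (x k + β k • (x k - x (k - 1)))‖ ^ 2 : ℝ) : EReal)
      + P₁ (x (k + 1))
      ≤ ((⟪f' (x k + β k • (x k - x (k - 1))) - ξ (k + 1), z⟫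
        + L / 2 * ‖z - (x k + β k • (x k - x (k - 1)))‖ ^ 2 : ℝ) : EReal) + P₁ z)

/-- Triples `(x, y, w)` with the ℓ² product inner product structure. -/
abbrev Trip (n : ℕ) := WithLp 2 (Eucl n × WithLp 2 (Eucl n × Eucl n))

def mkTrip {n : ℕ} (a b c : Eucl n) : Trip n :=
  (WithLp.equiv 2 _).symm (a, (WithLp.equiv 2 _).symm (b, c))

/-- `potE` as a function on triples. -/
def potE3 {n : ℕ} (f : Eucl n → ℝ) (P₁ : Eucl n → EReal) (P₂ : Eucl n → ℝ) (L : ℝ)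
    (p : Trip n) : EReal :=
  potE f P₁ P₂ L ((WithLp.equiv 2 _) p).1 ((WithLp.equiv 2 _) ((WithLp.equiv 2 _) p).2).1
    ((WithLp.equiv 2 _) ((WithLp.equiv 2 _) p).2).2

/-! ### Smooth convex estimates -/

lemma hasDerivAt_line {n : ℕ} {f : Eucl n → ℝ} {f' : Eucl n → Eucl n}
    (hfgrad : ∀ y, HasGradientAt f (f' y) y) (a d : Eucl n) (t : ℝ) :
    HasDerivAt (fun s : ℝ => f (a + s • d)) ⟪f' (a + t • d), d⟫ t := by
  have h1 : HasDerivAt (fun s : ℝ => a + s • d) d t := by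
    simpa using ((hasDerivAt_id t).smul_const d).const_add a
  have h2 := (hfgrad (a + t • d)).hasFDerivAt.comp_hasDerivAt t h1
  simp only [InnerProductSpace.toDual_apply_apply] at h2
  exact h2

lemma grad_ineq {n : ℕ} {f : Eucl n → ℝ} {f' : Eucl n → Eucl n}
    (hfconv : ConvexOn ℝ Set.univ f) (hfgrad : ∀ y, HasGradientAt f (f' y) y) (a b : Eucl n) :
    f a + ⟪f' a, b - a⟫ ≤ f b := by
  have hc : ConvexOn ℝ Set.univ (fun s : ℝ => f (a + s • (b - a))) := by
    have := hfconv.comp_affineMap (AffineMap.lineMap a b : ℝ →ᵃ[ℝ] Eucl n)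
    simp only [Set.preimage_univ] at this
    refine this.congr fun s _ => ?_
    simp [AffineMap.lineMap_apply, add_comm]
  have hd := hasDerivAt_line hfgrad a (b - a) 0
  have := hc.le_slope_of_hasDerivAt (Set.mem_univ 0) (Set.mem_univ 1) one_pos hd
  simp [slope_def_field] at this
  linarith

/-- The descent lemma for a function with `L`-Lipschitz gradient. -/
lemma descent_ineq {n : ℕ} {f : Eucl n → ℝ} {f' : Eucl n → Eucl n} {L : ℝ}
    (hfgrad : ∀ y, HasGradientAt f (f' y) y)
    (hflip : ∀ y z, ‖f' y - f' z‖ ≤ L * ‖y - z‖) (a b : Eucl n) :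
    f b ≤ f a + ⟪f' a, b - a⟫ + L / 2 * ‖b - a‖ ^ 2 := by
  set d := b - a with hd
  -- The gap between `f` and its quadratic model is nonincreasing along the segment.
  have hder : ∀ t : ℝ, HasDerivAt
      (fun s : ℝ => f (a + s • d) - s * ⟪f' a, d⟫ - L / 2 * ‖d‖ ^ 2 * s ^ 2)
      (⟪f' (a + t • d), d⟫ - ⟪f' a, d⟫ - L / 2 * ‖d‖ ^ 2 * (2 * t)) t := by
    intro t
    have h1 := hasDerivAt_line hfgrad a d t
    have h2 : HasDerivAt (fun s : ℝ => s * ⟪f' a, d⟫) ⟪f' a, d⟫ t := by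
      simpa using (hasDerivAt_id t).mul_const ⟪f' a, d⟫
    have h3 : HasDerivAt (fun s : ℝ => L / 2 * ‖d‖ ^ 2 * s ^ 2) (L / 2 * ‖d‖ ^ 2 * (2 * t)) t := by
      simpa using (hasDerivAt_pow 2 t).const_mul (L / 2 * ‖d‖ ^ 2)
    exact (h1.sub h2).sub h3
  have hanti := antitoneOn_of_deriv_nonpos (convex_Icc (0:ℝ) 1)
    (fun t _ => (hder t).continuousAt.continuousWithinAt)
    (fun t _ => (hder t).differentiableAt.differentiableWithinAt)
    (fun t ht => by
      rw [(hder t).deriv]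
      rw [interior_Icc] at ht
      have h1 : ⟪f' (a + t • d) - f' a, d⟫ ≤ ‖f' (a + t • d) - f' a‖ * ‖d‖ :=
        real_inner_le_norm _ _
      have h2 := hflip (a + t • d) a
      rw [add_sub_cancel_left, norm_smul, Real.norm_of_nonneg ht.1.le] at h2
      rw [inner_sub_left] at h1
      nlinarith [norm_nonneg d, mul_le_mul_of_nonneg_right h2 (norm_nonneg d)])
  have h := hanti (Set.left_mem_Icc.2 zero_le_one) (Set.right_mem_Icc.2 zero_le_one) zero_le_one
  simp [hd] at h
  linarith

/-! ### Subgradients and the potential -/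

/-- Equality case of the Fenchel–Young inequality. -/
lemma conjE_eq_of_subgrad {n : ℕ} {g : Eucl n → ℝ} {y x : Eucl n} (h : ConvexSubgradAt g y x) :
    conjE g y = ((⟪x, y⟫ - g x : ℝ) : EReal) := by
  apply le_antisymm
  · refine iSup_le fun z => ?_
    rw [EReal.coe_le_coe_iff]
    have := h z
    rw [inner_sub_right, real_inner_comm z, real_inner_comm x] at this
    linarith
  · exact le_iSup (fun x : Eucl n => ((⟪x, y⟫ - g x : ℝ) : EReal)) x

/-- The real value of the potential at `(a, y, w)` when `P₁ a = p` and `y ∈ ∂P₂(b)`. -/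
lemma potE_eq {n : ℕ} {f : Eucl n → ℝ} {P₁ : Eucl n → EReal} {P₂ : Eucl n → ℝ} {L p : ℝ}
    {a b y w : Eucl n} (hp : P₁ a = p) (h : ConvexSubgradAt P₂ y b) :
    potE f P₁ P₂ L a y w
      = ((f a + p - ⟪a, y⟫ + (⟪b, y⟫ - P₂ b) + L / 2 * ‖a - w‖ ^ 2 : ℝ) : EReal) := by
  unfold potE
  rw [hp, conjE_eq_of_subgrad h]
  push_cast
  rfl

lemma norm_mkTrip_sq {n : ℕ} (a b c : Eucl n) :
    ‖mkTrip a b c‖ ^ 2 = ‖a‖ ^ 2 + (‖b‖ ^ 2 + ‖c‖ ^ 2) := by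
  rw [WithLp.prod_norm_sq_eq_of_L2, WithLp.prod_norm_sq_eq_of_L2]
  rfl

lemma mkTrip_sub {n : ℕ} (a b c a' b' c' : Eucl n) :
    mkTrip a b c - mkTrip a' b' c' = mkTrip (a - a') (b - b') (c - c') := rfl

lemma inner_mkTrip {n : ℕ} (a b c a' b' c' : Eucl n) :
    ⟪mkTrip a b c, mkTrip a' b' c'⟫ = ⟪a, a'⟫ + (⟪b, b'⟫ + ⟪c, c'⟫) := by
  rw [WithLp.prod_inner_apply, WithLp.prod_inner_apply]
  rfl

lemma exists_eq_mkTrip {n : ℕ} (q : Trip n) : ∃ a b c, q = mkTrip a b c :=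
  ⟨q.fst, q.snd.fst, q.snd.snd, rfl⟩

lemma norm_mkTrip_le {n : ℕ} (a b c : Eucl n) : ‖mkTrip a b c‖ ≤ ‖a‖ + ‖b‖ + ‖c‖ := by
  apply le_of_sq_le_sq _ (by positivity)
  rw [norm_mkTrip_sq]
  nlinarith [norm_nonneg a, norm_nonneg b, norm_nonneg c, mul_nonneg (norm_nonneg a) (norm_nonneg b),
    mul_nonneg (norm_nonneg a) (norm_nonneg c), mul_nonneg (norm_nonneg b) (norm_nonneg c)]

/-- Subgradients of the pieces assemble to a limiting subgradient of the potential. Every term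
except the bilinear one is convex, and the bilinear term is quadratically close to its
linearisation, so the vector is even a Fréchet subgradient. -/
lemma mem_limSubdiff_potE3 {n : ℕ} {f : Eucl n → ℝ} {f' : Eucl n → Eucl n} {P₁ : Eucl n → EReal}
    {P₂ : Eucl n → ℝ} {L p : ℝ} {a b y w v : Eucl n} (hL : 0 < L)
    (hfconv : ConvexOn ℝ Set.univ f) (hfgrad : ∀ y, HasGradientAt f (f' y) y)
    (hp : P₁ a = p) (hv : ConvexSubgradAtE P₁ v a) (h : ConvexSubgradAt P₂ y b) :
    mkTrip (f' a + v - y + L • (a - w)) (b - a) (-(L • (a - w)))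
      ∈ limSubdiff (potE3 f P₁ P₂ L) (mkTrip a y w) := by
  refine ⟨fun _ => mkTrip a y w, fun _ => _, tendsto_const_nhds, tendsto_const_nhds,
    tendsto_const_nhds, fun _ ε hε => ?_⟩
  have hball : Metric.ball (mkTrip a y w) ε ∈ 𝓝[≠] (mkTrip a y w) :=
    mem_nhdsWithin_of_mem_nhds (Metric.ball_mem_nhds _ hε)
  filter_upwards [hball] with q hq
  obtain ⟨a', y', w', rfl⟩ := exists_eq_mkTrip q
  rw [Metric.mem_ball, dist_eq_norm] at hq
  have hlow : ((f a' + (p + ⟪v, a' - a⟫) - ⟪a', y'⟫ + (⟪b, y'⟫ - P₂ b)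
      + L / 2 * ‖a' - w'‖ ^ 2 : ℝ) : EReal) ≤ potE3 f P₁ P₂ L (mkTrip a' y' w') := by
    change _ ≤ potE f P₁ P₂ L a' y' w'
    unfold potE
    have h1 := hv a'
    rw [hp] at h1
    have h2 : ((⟪b, y'⟫ - P₂ b : ℝ) : EReal) ≤ conjE P₂ y' :=
      le_iSup (fun x : Eucl n => ((⟪x, y'⟫ - P₂ x : ℝ) : EReal)) b
    rw [EReal.coe_add, EReal.coe_add _ (⟪b, y'⟫ - P₂ b), EReal.coe_sub, EReal.coe_add (f a'),
      EReal.coe_add p]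
    gcongr
    exact EReal.sub_le_sub (by gcongr) le_rfl
  refine le_trans ?_ hlow
  have hval : potE3 f P₁ P₂ L (mkTrip a y w) = _ :=
    potE_eq (f := f) (L := L) (a := a) (y := y) (w := w) hp h
  rw [hval, ← EReal.coe_add, EReal.coe_le_coe_iff]
  rw [mkTrip_sub] at hq ⊢
  rw [inner_mkTrip]
  have hsq := norm_mkTrip_sq (a' - a) (y' - y) (w' - w)
  set N := ‖mkTrip (a' - a) (y' - y) (w' - w)‖ with hN
  have hN0 : 0 ≤ N := norm_nonneg _
  have hg := grad_ineq hfconv hfgrad a a'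
  have hquad : L / 2 * ‖a - w‖ ^ 2 + L * ⟪a - w, (a' - a) - (w' - w)⟫ ≤ L / 2 * ‖a' - w'‖ ^ 2 := by
    have : a' - w' = (a - w) + ((a' - a) - (w' - w)) := by abel
    rw [this, norm_add_sq_real]
    nlinarith [sq_nonneg ‖(a' - a) - (w' - w)‖]
  have hbil : ⟪a' - a, y' - y⟫ ≤ ε * N := by
    have h1 := real_inner_le_norm (a' - a) (y' - y)
    have h2 : ‖a' - a‖ * ‖y' - y‖ ≤ N ^ 2 := by
      nlinarith [sq_nonneg (‖a' - a‖ - ‖y' - y‖), sq_nonneg ‖w' - w‖, sq_nonneg ‖a' - a‖,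
        sq_nonneg ‖y' - y‖]
    nlinarith
  simp only [inner_sub_left, inner_sub_right, inner_add_left, inner_neg_left, real_inner_smul_left]
    at hg hquad hbil ⊢
  rw [real_inner_comm a y, real_inner_comm a' y]
  linarith

/-- The optimality condition of the proximal subproblem: since the quadratic term contributes only
`O(t²)` along a segment, minimality gives a convex subgradient of `P₁`. -/
lemma subgrad_of_prox_min {n : ℕ} {P₁ : Eucl n → EReal} {L p : ℝ} {c u a : Eucl n}
    (hP₁ : ProperClosedConvexE P₁) (hp : P₁ a = p)
    (hmin : ∀ z : Eucl n, ((⟪c, a⟫ + L / 2 * ‖a - u‖ ^ 2 : ℝ) : EReal) + P₁ a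
      ≤ ((⟪c, z⟫ + L / 2 * ‖z - u‖ ^ 2 : ℝ) : EReal) + P₁ z) :
    ConvexSubgradAtE P₁ (-c - L • (a - u)) a := by
  intro z
  rw [hp]
  rcases eq_or_ne (P₁ z) ⊤ with hz | hz
  · rw [hz]; exact le_top
  obtain ⟨r, hr⟩ : ∃ r : ℝ, P₁ z = r := ⟨(P₁ z).toReal, (EReal.coe_toReal hz (hP₁.1 z)).symm⟩
  rw [hr, ← EReal.coe_add, EReal.coe_le_coe_iff]
  have key : ∀ t ∈ Ioo (0:ℝ) 1,
      p ≤ r + ⟪c, z - a⟫ + L * ⟪a - u, z - a⟫ + t * (L / 2 * ‖z - a‖ ^ 2) := by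
    intro t ht
    have h1 := hP₁.2.2.2 z a t ht
    rw [hr, hp, ← EReal.coe_mul, ← EReal.coe_mul, ← EReal.coe_add] at h1
    have h2 := (hmin (t • z + (1 - t) • a)).trans (add_le_add_right h1 _)
    rw [hp, ← EReal.coe_add, ← EReal.coe_add, EReal.coe_le_coe_iff] at h2
    have e1 : t • z + (1 - t) • a - u = (a - u) + t • (z - a) := by module
    have e2 : t • z + (1 - t) • a = a + t • (z - a) := by module
    rw [e1, e2, norm_add_sq_real, inner_add_right, real_inner_smul_right, real_inner_smul_right,
      norm_smul, Real.norm_of_nonneg ht.1.le] at h2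
    have h3 : 0 ≤ t * (r + ⟪c, z - a⟫ + L * ⟪a - u, z - a⟫ + t * (L / 2 * ‖z - a‖ ^ 2) - p) := by
      nlinarith
    have := nonneg_of_mul_nonneg_right h3 ht.1
    linarith
  have hlim : Tendsto (fun t : ℝ => r + ⟪c, z - a⟫ + L * ⟪a - u, z - a⟫
      + t * (L / 2 * ‖z - a‖ ^ 2)) (𝓝[>] 0)
      (𝓝 (r + ⟪c, z - a⟫ + L * ⟪a - u, z - a⟫ + 0 * (L / 2 * ‖z - a‖ ^ 2))) :=
    ((Continuous.tendsto (by fun_prop) 0)).mono_left nhdsWithin_le_nhds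
  have := ge_of_tendsto hlim (by
    filter_upwards [Ioo_mem_nhdsGT (zero_lt_one' ℝ)] with t ht using key t ht)
  rw [inner_sub_left, inner_neg_left, real_inner_smul_left]
  linarith

/-! ### One step of the algorithm -/

/-- The real value of the potential at `(a, y, b)` when `P₁ a = p` and `y ∈ ∂P₂(b)`, the conjugate
`P₂* y` being replaced by `⟪b, y⟫ - P₂ b`. -/
def potVal {n : ℕ} (f P₂ : Eucl n → ℝ) (L p : ℝ) (a y b : Eucl n) : ℝ :=
  f a + p - ⟪a, y⟫ + (⟪b, y⟫ - P₂ b) + L / 2 * ‖a - b‖ ^ 2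

lemma le_potVal {n : ℕ} {f P₂ : Eucl n → ℝ} {L p : ℝ} {a y b : Eucl n} (hL : 0 < L)
    (h : ConvexSubgradAt P₂ y b) : f a + p - P₂ a ≤ potVal f P₂ L p a y b := by
  have h1 := h a
  rw [inner_sub_right, real_inner_comm a y, real_inner_comm b y] at h1
  unfold potVal
  nlinarith [sq_nonneg ‖a - b‖]

/-- Sufficient decrease of the potential along two consecutive iterations `x₀, x₁, x₂`. -/
lemma potVal_descent {n : ℕ} {f P₂ : Eucl n → ℝ} {f' : Eucl n → Eucl n} {L b p₁ p₂ : ℝ}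
    {x₀ x₁ x₂ ξ₁ ξ₂ u : Eucl n}
    (hfconv : ConvexOn ℝ Set.univ f) (hfgrad : ∀ y, HasGradientAt f (f' y) y)
    (hflip : ∀ y z, ‖f' y - f' z‖ ≤ L * ‖y - z‖)
    (hu : u = x₁ + b • (x₁ - x₀)) (hξ : ConvexSubgradAt P₂ ξ₁ x₀)
    (hv : p₂ + ⟪-(f' u - ξ₂) - L • (x₂ - u), x₁ - x₂⟫ ≤ p₁) :
    potVal f P₂ L p₂ x₂ ξ₂ x₁
      ≤ potVal f P₂ L p₁ x₁ ξ₁ x₀ - L / 2 * (1 - b ^ 2) * ‖x₁ - x₀‖ ^ 2 := by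
  have h1 := descent_ineq hfgrad hflip u x₂
  have h2 := grad_ineq hfconv hfgrad u x₁
  have h3 := hξ x₁
  have h4 : ‖x₁ - u‖ ^ 2 = b ^ 2 * ‖x₁ - x₀‖ ^ 2 := by
    rw [hu, sub_add_cancel_left, norm_neg, norm_smul, mul_pow, Real.norm_eq_abs, sq_abs]
  have h5 : ‖x₁ - u‖ ^ 2 = ‖x₂ - u‖ ^ 2 + 2 * ⟪x₂ - u, x₁ - x₂⟫ + ‖x₂ - x₁‖ ^ 2 := by
    have : x₁ - u = (x₂ - u) + (x₁ - x₂) := by abel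
    rw [this, norm_add_sq_real, norm_sub_rev x₂ x₁]
  unfold potVal
  rw [inner_sub_left, real_inner_smul_left] at hv
  have h6 : L / 2 * (b ^ 2 * ‖x₁ - x₀‖ ^ 2)
      = L / 2 * (‖x₂ - u‖ ^ 2 + 2 * ⟪x₂ - u, x₁ - x₂⟫ + ‖x₂ - x₁‖ ^ 2) := by
    rw [← h4, h5]
  simp only [inner_sub_left, inner_sub_right, inner_neg_left] at *
  simp only [real_inner_comm ξ₁, real_inner_comm ξ₂] at *
  linarith

/-- Size of the subgradient of the potential supplied by one iteration. -/
lemma subgrad_norm_sq_le {n : ℕ} {f' : Eucl n → Eucl n} {L b : ℝ} {x₀ x₁ x₂ ξ₂ u : Eucl n}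
    (hL : 0 < L) (hflip : ∀ y z, ‖f' y - f' z‖ ≤ L * ‖y - z‖) (hb : b ∈ Ico (0:ℝ) 1)
    (hu : u = x₁ + b • (x₁ - x₀)) :
    ‖mkTrip (f' x₂ + (-(f' u - ξ₂) - L • (x₂ - u)) - ξ₂ + L • (x₂ - x₁)) (x₁ - x₂)
      (-(L • (x₂ - x₁)))‖ ^ 2
      ≤ (19 * L ^ 2 + 1) * (‖x₂ - x₁‖ ^ 2 + ‖x₁ - x₀‖ ^ 2) := by
  rw [norm_mkTrip_sq, norm_neg, norm_smul, norm_sub_rev x₁ x₂, Real.norm_of_nonneg hL.le]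
  have e1 : f' x₂ + (-(f' u - ξ₂) - L • (x₂ - u)) - ξ₂ + L • (x₂ - x₁)
      = (f' x₂ - f' u) - L • (x₂ - u) + L • (x₂ - x₁) := by abel
  have h1 : ‖x₂ - u‖ ≤ ‖x₂ - x₁‖ + ‖x₁ - x₀‖ := by
    have : x₂ - u = (x₂ - x₁) - b • (x₁ - x₀) := by rw [hu]; abel
    rw [this]
    refine (norm_sub_le _ _).trans ?_
    rw [norm_smul, Real.norm_of_nonneg hb.1]
    nlinarith [norm_nonneg (x₁ - x₀), hb.2]
  have h2 : ‖f' x₂ + (-(f' u - ξ₂) - L • (x₂ - u)) - ξ₂ + L • (x₂ - x₁)‖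
      ≤ L * (3 * ‖x₂ - x₁‖ + 2 * ‖x₁ - x₀‖) := by
    rw [e1]
    refine (norm_add_le _ _).trans ?_
    have h3 := norm_sub_le (f' x₂ - f' u) (L • (x₂ - u))
    rw [norm_smul, Real.norm_of_nonneg hL.le] at h3
    rw [norm_smul, Real.norm_of_nonneg hL.le]
    nlinarith [hflip x₂ u, mul_le_mul_of_nonneg_left h1 hL.le]
  have h3 := pow_le_pow_left₀ (norm_nonneg _) h2 2
  have h4 : (3 * ‖x₂ - x₁‖ + 2 * ‖x₁ - x₀‖) ^ 2 ≤ 18 * (‖x₂ - x₁‖ ^ 2 + ‖x₁ - x₀‖ ^ 2) := by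
    nlinarith [sq_nonneg (3 * ‖x₂ - x₁‖ - 2 * ‖x₁ - x₀‖), sq_nonneg ‖x₁ - x₀‖]
  have h5 := mul_le_mul_of_nonneg_left h4 (sq_nonneg L)
  nlinarith [sq_nonneg ‖x₁ - x₀‖, mul_nonneg (sq_nonneg L) (sq_nonneg ‖x₁ - x₀‖)]

/-! ### Cluster points -/

/-- Passing to the limit in the optimality conditions. The values `P₁ (a m)` converge because all
other terms of the potential do; lower semicontinuity and the limiting subgradient inequality
identify their limit with `P₁ xbar`. -/
lemma cluster_point {n : ℕ} {f P₂ : Eucl n → ℝ} {f' : Eucl n → Eucl n} {P₁ : Eucl n → EReal}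
    {L ζ : ℝ} {a b u y : ℕ → Eucl n} {p : ℕ → ℝ} {xbar ybar : Eucl n}
    (hf : Continuous f) (hf' : Continuous f') (hP₂ : Continuous P₂) (hlsc : LowerSemicontinuous P₁)
    (hp : ∀ m, P₁ (a m) = p m) (hy : ∀ m, ConvexSubgradAt P₂ (y m) (b m))
    (hv : ∀ m, ConvexSubgradAtE P₁ (-(f' (u m) - y m) - L • (a m - u m)) (a m))
    (ha : Tendsto a atTop (𝓝 xbar)) (hb : Tendsto b atTop (𝓝 xbar))
    (hu : Tendsto u atTop (𝓝 xbar)) (hyl : Tendsto y atTop (𝓝 ybar))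
    (hζ : Tendsto (fun m => potVal f P₂ L (p m) (a m) (y m) (b m)) atTop (𝓝 ζ)) :
    ∃ r : ℝ, P₁ xbar = r ∧ ConvexSubgradAtE P₁ (ybar - f' xbar) xbar ∧
      ConvexSubgradAt P₂ ybar xbar ∧ potVal f P₂ L r xbar ybar xbar = ζ := by
  have hfa := (hf.tendsto xbar).comp ha
  have hPb := (hP₂.tendsto xbar).comp hb
  have hsub : ConvexSubgradAt P₂ ybar xbar := by
    intro z
    exact le_of_tendsto (hPb.add (hyl.inner (hb.const_sub z))) (Eventually.of_forall fun m => hy m z)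
  set r : ℝ := ζ - (f xbar - ⟪xbar, ybar⟫ + (⟪xbar, ybar⟫ - P₂ xbar) + L / 2 * ‖xbar - xbar‖ ^ 2)
    with hr
  have hpl : Tendsto p atTop (𝓝 r) := by
    have h1 := hζ.sub (((hfa.sub (ha.inner hyl)).add ((hb.inner hyl).sub hPb)).add
      (((ha.sub hb).norm.pow 2).const_mul (L / 2)))
    refine h1.congr fun m => ?_
    simp only [potVal, Function.comp]
    ring
  have hpE : Tendsto (fun m => P₁ (a m)) atTop (𝓝 (r : EReal)) := by
    simp only [hp]
    exact (continuous_coe_real_ereal.tendsto r).comp hpl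
  have hle : P₁ xbar ≤ r := by
    by_contra hcon
    obtain ⟨s, hs1, hs2⟩ := exists_between (not_le.1 hcon)
    have h1 := ha.eventually (hlsc xbar s hs2)
    have h2 := hpE.eventually (gt_mem_nhds hs1)
    obtain ⟨m, hm1, hm2⟩ := (h1.and h2).exists
    exact lt_asymm hm1 hm2
  have hvl : Tendsto (fun m => -(f' (u m) - y m) - L • (a m - u m)) atTop (𝓝 (ybar - f' xbar)) := by
    have h1 := ((((hf'.tendsto xbar).comp hu).sub hyl).neg).sub ((ha.sub hu).const_smul L)
    simpa using h1
  have hlim : ∀ z, ((r + ⟪ybar - f' xbar, z - xbar⟫ : ℝ) : EReal) ≤ P₁ z := by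
    intro z
    have h1 := hpl.add (hvl.inner (ha.const_sub z))
    refine le_of_tendsto ((continuous_coe_real_ereal.tendsto _).comp h1)
      (Eventually.of_forall fun m => ?_)
    have h2 := hv m z
    rw [hp, ← EReal.coe_add] at h2
    exact h2
  have heq : P₁ xbar = r := le_antisymm hle (by simpa using hlim xbar)
  refine ⟨r, heq, fun z => ?_, hsub, ?_⟩
  · rw [heq, ← EReal.coe_add]
    exact hlim z
  · rw [potVal, hr]
    ring

lemma kl_half_sq {c s I G : ℝ} (hc : 0 < c) (hs : 0 < s) (hIG : I ≤ G)
    (h : 1 ≤ c * (1 - 1 / 2) * s ^ (-(1 / 2) : ℝ) * I) : s ≤ (c / 2) ^ 2 * G ^ 2 := by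
  rw [Real.rpow_neg hs.le, ← Real.sqrt_eq_rpow] at h
  have hq : 0 < √s := Real.sqrt_pos.2 hs
  have h1 : √s ≤ c / 2 * I := by
    have : c * (1 - 1 / 2) * (√s)⁻¹ * I = (c / 2 * I) / √s := by field_simp; norm_num
    rw [this, le_div_iff₀ hq] at h
    linarith
  have h2 : √s ≤ c / 2 * G := h1.trans (by gcongr)
  calc s = √s ^ 2 := (Real.sq_sqrt hs.le).symm
    _ ≤ (c / 2 * G) ^ 2 := by gcongr
    _ = _ := by ring

/-! ### Rates -/

/-- A two-step contraction of the excess gives a geometric rate, which the sufficient decrease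
transfers to the step lengths. -/
lemma geometric_rate {e d : ℕ → ℝ} {D ζ C : ℝ} (hD : 0 < D) (hC : 0 < C)
    (hdesc : ∀ k, e (k + 1) ≤ e k - D * d k ^ 2) (hζ : ∀ k, ζ ≤ e k)
    (hrec : ∀ᶠ k in atTop, e (k + 2) - ζ ≤ C * (e k - e (k + 2))) :
    ∃ M > (0:ℝ), ∃ q ∈ Ioo (0:ℝ) 1, ∀ k, e k - ζ ≤ M * q ^ k ∧ d k ≤ M * q ^ k := by
  obtain ⟨N, hN⟩ := eventually_atTop.1 hrec
  have hanti : Antitone e := antitone_nat_of_succ_le fun k => by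
    nlinarith [hdesc k, sq_nonneg (d k)]
  have hr0 : 0 < C / (1 + C) := by positivity
  have hr1 : C / (1 + C) < 1 := by rw [div_lt_one (by positivity)]; linarith
  set s := √(C / (1 + C)) with hs
  have hs0 : 0 < s := Real.sqrt_pos.2 hr0
  have hs1 : s < 1 := by rw [hs, Real.sqrt_lt' one_pos]; simpa using hr1
  have hs2 : s ^ 2 = C / (1 + C) := Real.sq_sqrt hr0.le
  set M := (e 0 - ζ + 1) / s ^ (N + 1) with hM
  have hM0 : 0 < M := div_pos (by linarith [hζ 0]) (by positivity)
  have hval : ∀ k, e k - ζ ≤ M * s ^ k := by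
    intro k
    induction k using Nat.strong_induction_on with
    | _ k ih =>
      rcases lt_or_ge k (N + 2) with hk | hk
      · have h1 : s ^ (N + 1) ≤ s ^ k := pow_le_pow_of_le_one hs0.le hs1.le (by omega)
        calc e k - ζ ≤ e 0 - ζ + 1 := by linarith [hanti (Nat.zero_le k)]
          _ = M * s ^ (N + 1) := by rw [hM]; field_simp
          _ ≤ M * s ^ k := by gcongr
      · obtain ⟨j, rfl⟩ : ∃ j, k = j + 2 := ⟨k - 2, by omega⟩
        have h1 := hN j (by omega)
        have h2 : e (j + 2) - ζ ≤ s ^ 2 * (e j - ζ) := by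
          rw [hs2, div_mul_eq_mul_div, le_div_iff₀ (by positivity)]
          nlinarith
        calc e (j + 2) - ζ ≤ s ^ 2 * (e j - ζ) := h2
          _ ≤ s ^ 2 * (M * s ^ j) := by gcongr; exact ih j (by omega)
          _ = M * s ^ (j + 2) := by ring
  set q := √s with hq
  have hq0 : 0 < q := Real.sqrt_pos.2 hs0
  have hq1 : q < 1 := by rw [hq, Real.sqrt_lt' one_pos]; simpa using hs1
  have hq2 : q ^ 2 = s := Real.sq_sqrt hs0.le
  refine ⟨M + √(M / D), by positivity, q, ⟨hq0, hq1⟩, fun k => ⟨?_, ?_⟩⟩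
  · have h1 : s ^ k ≤ q ^ k := by
      gcongr
      nlinarith
    calc e k - ζ ≤ M * s ^ k := hval k
      _ ≤ M * q ^ k := by gcongr
      _ ≤ _ := by gcongr; linarith [Real.sqrt_nonneg (M / D)]
  · have h1 : d k ≤ √(M / D) * q ^ k := by
      apply le_of_sq_le_sq _ (by positivity)
      rw [mul_pow, Real.sq_sqrt (by positivity), ← pow_mul, mul_comm k 2, pow_mul, hq2,
        div_mul_eq_mul_div, le_div_iff₀ hD]
      linarith [hdesc k, hζ (k + 1), hval k]
    exact h1.trans (by gcongr; linarith)

/-! ### Boundedness -/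

/-- Subgradients of a continuous function are bounded over bounded sets. -/
lemma exists_subgrad_bound {n : ℕ} {g : Eucl n → ℝ} (hg : Continuous g) (R : ℝ) :
    ∃ M : ℝ, ∀ a y : Eucl n, ‖a‖ ≤ R → ConvexSubgradAt g y a → ‖y‖ ≤ M := by
  obtain ⟨M, hM⟩ := (isCompact_closedBall (0 : Eucl n) (R + 1)).exists_bound_of_continuousOn
    hg.continuousOn
  refine ⟨2 * M, fun a y ha hy => ?_⟩
  have haM := hM a (by simp; linarith)
  rcases eq_or_ne y 0 with rfl | hy0
  · rw [norm_zero]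
    linarith [norm_nonneg (g a)]
  have hn : 0 < ‖y‖ := norm_pos_iff.2 hy0
  -- Testing the subgradient inequality one unit away in the direction of `y`.
  have h1 := hy (a + ‖y‖⁻¹ • y)
  have h2 := hM (a + ‖y‖⁻¹ • y) (by
    rw [mem_closedBall_zero_iff]
    refine (norm_add_le _ _).trans ?_
    rw [norm_smul, norm_inv, norm_norm, inv_mul_cancel₀ hn.ne']
    linarith)
  rw [add_sub_cancel_left, real_inner_smul_right, real_inner_self_eq_norm_sq, sq,
    inv_mul_cancel_left₀ hn.ne'] at h1
  rw [Real.norm_eq_abs] at haM h2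
  linarith [(abs_le.1 haM).1, (abs_le.1 h2).2]

lemma exists_lower_bound {n : ℕ} {f P₂ : Eucl n → ℝ} {P₁ : Eucl n → EReal} (hf : Continuous f)
    (hP₂ : Continuous P₂) (hP₁ : ProperClosedConvexE P₁) (R : ℝ) :
    ∃ m : ℝ, ∀ (a : Eucl n) (p : ℝ), ‖a‖ ≤ R → P₁ a = p → m ≤ f a + p - P₂ a := by
  rcases lt_or_ge R 0 with hR | hR
  · exact ⟨0, fun a p ha => absurd (norm_nonneg a) (by linarith)⟩
  have hK := isCompact_closedBall (0 : Eucl n) R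
  obtain ⟨M₁, hM₁⟩ := hK.exists_bound_of_continuousOn (hf.sub hP₂).continuousOn
  obtain ⟨a₀, -, hmin⟩ := LowerSemicontinuousOn.exists_isMinOn
    ⟨0, by simpa using hR⟩ hK (hP₁.2.2.1.lowerSemicontinuousOn _)
  obtain ⟨m, hm⟩ : ∃ m : ℝ, (m : EReal) ≤ P₁ a₀ := by
    obtain ⟨m, -, hm⟩ := EReal.lt_iff_exists_real_btwn.1 (bot_lt_iff_ne_bot.2 (hP₁.1 a₀))
    exact ⟨m, hm.le⟩
  refine ⟨m - M₁, fun a p ha hp => ?_⟩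
  have ha' : a ∈ closedBall (0 : Eucl n) R := by simpa using ha
  have h1 := hm.trans (hmin ha')
  rw [hp, EReal.coe_le_coe_iff] at h1
  have h2 := hM₁ a ha'
  rw [Real.norm_eq_abs] at h2
  have h3 := (abs_le.1 h2).1
  simp only [Pi.sub_apply] at h3
  linarith

/-! ### The Kurdyka–Łojasiewicz error bound -/

/-- The KL inequality with exponent `1/2` at a cluster point bounds the excess of the potential at
nearby iterates by the squared lengths of the last two steps. -/
lemma kl_local_bound {n : ℕ} {f P₂ : Eucl n → ℝ} {f' : Eucl n → Eucl n} {P₁ : Eucl n → EReal}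
    {L ζ r : ℝ} {xbar ybar : Eucl n} (hL : 0 < L)
    (hfconv : ConvexOn ℝ Set.univ f) (hfgrad : ∀ y, HasGradientAt f (f' y) y)
    (hflip : ∀ y z, ‖f' y - f' z‖ ≤ L * ‖y - z‖)
    (hKL : IsKLWithExp (potE3 f P₁ P₂ L) (1 / 2))
    (hr : P₁ xbar = r) (hv : ConvexSubgradAtE P₁ (ybar - f' xbar) xbar)
    (hy : ConvexSubgradAt P₂ ybar xbar) (hζ : potVal f P₂ L r xbar ybar xbar = ζ) :
    ∃ c > (0:ℝ), ∃ ε > (0:ℝ), ∃ a > (0:ℝ), ∀ (x₀ x₁ x₂ ξ₂ u : Eucl n) (p b : ℝ),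
      P₁ x₂ = p → ConvexSubgradAt P₂ ξ₂ x₁ → b ∈ Ico (0:ℝ) 1 → u = x₁ + b • (x₁ - x₀) →
      ConvexSubgradAtE P₁ (-(f' u - ξ₂) - L • (x₂ - u)) x₂ →
      ‖x₂ - xbar‖ + ‖ξ₂ - ybar‖ + ‖x₁ - xbar‖ ≤ ε →
      ζ < potVal f P₂ L p x₂ ξ₂ x₁ → potVal f P₂ L p x₂ ξ₂ x₁ < ζ + a →
      potVal f P₂ L p x₂ ξ₂ x₁ - ζ ≤ c * (‖x₂ - x₁‖ ^ 2 + ‖x₁ - x₀‖ ^ 2) := by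
  obtain ⟨c, hc, ε, hε, a, ha, H⟩ := hKL (mkTrip xbar ybar xbar)
    ⟨_, mem_limSubdiff_potE3 (w := xbar) hL hfconv hfgrad hr hv hy⟩
  refine ⟨(c / 2) ^ 2 * (19 * L ^ 2 + 1), by positivity, ε, hε, a, ha, ?_⟩
  intro x₀ x₁ x₂ ξ₂ u p b hp hξ hb hu hv₂ hnear hlow hupp
  have hval0 : potE3 f P₁ P₂ L (mkTrip xbar ybar xbar) = (ζ : EReal) := by
    rw [← hζ]
    exact potE_eq (f := f) (L := L) (a := xbar) (y := ybar) (w := xbar) hr hy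
  have hval : potE3 f P₁ P₂ L (mkTrip x₂ ξ₂ x₁) = (potVal f P₂ L p x₂ ξ₂ x₁ : EReal) :=
    potE_eq (f := f) (L := L) (a := x₂) (y := ξ₂) (w := x₁) hp hξ
  have hmem := mem_limSubdiff_potE3 (w := x₁) hL hfconv hfgrad hp hv₂ hξ
  have h := H (mkTrip x₂ ξ₂ x₁)
    (by rw [mkTrip_sub]; exact (norm_mkTrip_le _ _ _).trans hnear)
    (by rw [hval0, hval]; exact_mod_cast hlow)
    (by rw [hval0, hval]; exact_mod_cast hupp) ⟨_, hmem⟩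
  rw [hval0, hval, EReal.toReal_coe, EReal.toReal_coe] at h
  have hdist := infDist_le_dist_of_mem (x := (0 : Trip n)) hmem
  rw [dist_zero_left] at hdist
  have h1 := kl_half_sq hc (sub_pos.2 hlow) hdist h
  have h2 := subgrad_norm_sq_le (ξ₂ := ξ₂) (x₂ := x₂) hL hflip hb hu
  calc _ ≤ _ := h1
    _ ≤ (c / 2) ^ 2 * ((19 * L ^ 2 + 1) * (‖x₂ - x₁‖ ^ 2 + ‖x₁ - x₀‖ ^ 2)) := by gcongr
    _ = _ := by ring

/-- Local linear convergence of pDCAe when the potential function `E` is a KL function with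
exponent `1/2`: the potential values converge R-linearly to their limit `ζ` and the iterates
converge R-linearly to a stationary point of `F`. -/
theorem pDCAe_linear_convergence
    {n : ℕ} (f : Eucl n → ℝ) (f' : Eucl n → Eucl n) (P₁ : Eucl n → EReal)
    (P₂ : Eucl n → ℝ) (L : ℝ) (β : ℕ → ℝ) (x ξ : ℕ → Eucl n)
    (hL : 0 < L)
    (hfconv : ConvexOn ℝ Set.univ f)
    (hfgrad : ∀ y, HasGradientAt f (f' y) y)
    (hflip : ∀ y z, ‖f' y - f' z‖ ≤ L * ‖y - z‖)
    (hP₁ : ProperClosedConvexE P₁)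
    (hP₂cont : Continuous P₂)
    (hP₂conv : ConvexOn ℝ Set.univ P₂)
    (hβ : ∀ k, β k ∈ Set.Ico (0:ℝ) 1)
    (hβsup : ∃ B < (1:ℝ), ∀ k, β k ≤ B)
    (hlevel : ∀ γ : ℝ, IsBounded {y : Eucl n |
      ((f y : ℝ) : EReal) + P₁ y - ((P₂ y : ℝ) : EReal) ≤ (γ : EReal)})
    (hseq : IsPDCAe f' P₁ P₂ L β x ξ)
    (hKL : IsKLWithExp (potE3 f P₁ P₂ L) (1 / 2))
    : ∃ ζ : ℝ, ∃ xbar : Eucl n,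
      Tendsto (fun k : ℕ => potE f P₁ P₂ L (x k) (ξ k) (x (k - 1))) atTop (𝓝 (ζ : EReal)) ∧
      (∃ v₁ v₂ : Eucl n, ConvexSubgradAtE P₁ v₁ xbar ∧ ConvexSubgradAt P₂ v₂ xbar ∧
        f' xbar + v₁ - v₂ = 0) ∧
      Tendsto x atTop (𝓝 xbar) ∧
      (∃ C > (0:ℝ), ∃ q ∈ Set.Ioo (0:ℝ) 1,
        (∀ k : ℕ, 1 ≤ k → ∃ t : ℝ,
          potE f P₁ P₂ L (x k) (ξ k) (x (k - 1)) = (t : EReal) ∧ |t - ζ| ≤ C * q ^ k) ∧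
        (∀ k : ℕ, ‖x k - xbar‖ ≤ C * q ^ k)) ∧
      (∃ C' > (0:ℝ), ∀ᶠ k : ℕ in atTop,
        potE f P₁ P₂ L (x (k + 1)) (ξ (k + 1)) (x k) - (ζ : EReal)
          ≤ ((C' : ℝ) : EReal) *
            (potE f P₁ P₂ L (x (k - 1)) (ξ (k - 1)) (x (k - 2))
              - potE f P₁ P₂ L (x (k + 1)) (ξ (k + 1)) (x k))) := by
  obtain ⟨hx0, hξ, hmin⟩ := hseq
  obtain ⟨B, hB1, hB⟩ := hβsup
  have hf'c : Continuous f' :=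
    (LipschitzWith.of_dist_le_mul (K := ⟨L, hL.le⟩) fun y z => by
      rw [dist_eq_norm, dist_eq_norm]
      exact hflip y z).continuous
  have hfc : Continuous f :=
    continuous_iff_continuousAt.2 fun y => (hfgrad y).hasFDerivAt.continuousAt
  -- `P₁` is finite along the iterates: compare the minimiser with `x 0`.
  have hfin : ∀ k, P₁ (x k) ≠ ⊤ := by
    intro k
    rcases k with _ | k
    · exact hx0
    intro htop
    have h := hmin k (x 0)
    rw [htop, EReal.coe_add_top, top_le_iff] at h
    exact (EReal.add_lt_top (EReal.coe_ne_top _) hx0).ne h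
  obtain ⟨p, hp⟩ : ∃ p : ℕ → ℝ, ∀ k, P₁ (x k) = p k :=
    ⟨fun k => (P₁ (x k)).toReal, fun k => (EReal.coe_toReal (hfin k) (hP₁.1 _)).symm⟩
  set u : ℕ → Eucl n := fun k => x k + β k • (x k - x (k - 1)) with hu
  have husucc : ∀ k, u (k + 1) = x (k + 1) + β (k + 1) • (x (k + 1) - x k) := fun k => rfl
  have hv : ∀ k, ConvexSubgradAtE P₁ (-(f' (u k) - ξ (k + 1)) - L • (x (k + 1) - u k))
      (x (k + 1)) := fun k => subgrad_of_prox_min hP₁ (hp (k + 1)) (hmin k)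
  set e : ℕ → ℝ := fun k => potVal f P₂ L (p (k + 1)) (x (k + 1)) (ξ (k + 1)) (x k) with he
  set d : ℕ → ℝ := fun k => ‖x (k + 1) - x k‖ with hd
  have hpot : ∀ k, potE f P₁ P₂ L (x (k + 1)) (ξ (k + 1)) (x k) = (e k : EReal) :=
    fun k => potE_eq (hp (k + 1)) (hξ k)
  have hB0 : 0 ≤ B := (hβ 0).1.trans (hB 0)
  set D : ℝ := L / 2 * (1 - B ^ 2) with hDdef
  have hD : 0 < D := by
    have : B ^ 2 < 1 := by nlinarith
    have : 0 < 1 - B ^ 2 := by linarith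
    positivity
  have hdesc : ∀ k, e (k + 1) ≤ e k - D * d k ^ 2 := by
    intro k
    have h1 := hv (k + 1) (x (k + 1))
    rw [hp, hp, ← EReal.coe_add, EReal.coe_le_coe_iff] at h1
    have h2 := potVal_descent hfconv hfgrad hflip (husucc k) (hξ k) h1
    have h3 : β (k + 1) ^ 2 ≤ B ^ 2 := pow_le_pow_left₀ (hβ _).1 (hB _) 2
    have h4 : D * d k ^ 2 ≤ L / 2 * (1 - β (k + 1) ^ 2) * ‖x (k + 1) - x k‖ ^ 2 := by
      rw [hDdef]
      gcongr
    linarith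
  have hanti : Antitone e := antitone_nat_of_succ_le fun k => by
    nlinarith [hdesc k, sq_nonneg (d k)]
  obtain ⟨R, hR⟩ : ∃ R : ℝ, ∀ k, ‖x k‖ ≤ R := by
    obtain ⟨R, hR⟩ := (hlevel (e 0)).exists_norm_le
    refine ⟨max R ‖x 0‖, fun k => ?_⟩
    rcases k with _ | k
    · exact le_max_right _ _
    refine le_max_of_le_left (hR _ ?_)
    rw [Set.mem_ofPred_eq, hp, ← EReal.coe_add, ← EReal.coe_sub, EReal.coe_le_coe_iff]
    exact (le_potVal hL (hξ k)).trans (hanti (Nat.zero_le k))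
  obtain ⟨m, hm⟩ := exists_lower_bound hfc hP₂cont hP₁ R
  have hbdd : BddBelow (Set.range e) := by
    refine ⟨m, ?_⟩
    rintro _ ⟨k, rfl⟩
    exact (hm _ _ (hR (k + 1)) (hp (k + 1))).trans (le_potVal hL (hξ k))
  obtain ⟨S, hS⟩ := exists_subgrad_bound hP₂cont R
  set ζ : ℝ := ⨅ k, e k with hζdef
  have hζlim : Tendsto e atTop (𝓝 ζ) := tendsto_atTop_ciInf hanti hbdd
  have hζle : ∀ k, ζ ≤ e k := fun k => ciInf_le hbdd k
  have hd0 : Tendsto d atTop (𝓝 0) := by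
    have h1 : Tendsto (fun k => (e k - e (k + 1)) / D) atTop (𝓝 0) := by
      simpa using (hζlim.sub (hζlim.comp (tendsto_add_atTop_nat 1))).div_const D
    have h2 : Tendsto (fun k => d k ^ 2) atTop (𝓝 0) := by
      refine squeeze_zero (fun k => sq_nonneg _) (fun k => ?_) h1
      rw [le_div_iff₀ hD]
      linarith [hdesc k]
    have h3 := h2.sqrt
    rw [Real.sqrt_zero] at h3
    exact h3.congr fun k => Real.sqrt_sq (norm_nonneg _)
  -- Every limit of a subsequence of the pairs `(x, ξ)` satisfies the limiting conditions.
  have hcluster : ∀ (φ : ℕ → ℕ) (xbar ybar : Eucl n), Tendsto φ atTop atTop →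
      Tendsto (fun j => x (φ j + 2)) atTop (𝓝 xbar) →
      Tendsto (fun j => ξ (φ j + 2)) atTop (𝓝 ybar) →
      Tendsto (fun j => x (φ j + 1)) atTop (𝓝 xbar) ∧
      ∃ r : ℝ, P₁ xbar = r ∧ ConvexSubgradAtE P₁ (ybar - f' xbar) xbar ∧
        ConvexSubgradAt P₂ ybar xbar ∧ potVal f P₂ L r xbar ybar xbar = ζ := by
    intro φ xbar ybar hφ hx hy
    have hdz : Tendsto (fun j => x (φ j + 2) - x (φ j + 1)) atTop (𝓝 0) :=
      tendsto_zero_iff_norm_tendsto_zero.2 (hd0.comp ((tendsto_add_atTop_nat 1).comp hφ))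
    have hdz' : Tendsto (fun j => x (φ j + 1) - x (φ j)) atTop (𝓝 0) :=
      tendsto_zero_iff_norm_tendsto_zero.2 (hd0.comp hφ)
    have hx1 : Tendsto (fun j => x (φ j + 1)) atTop (𝓝 xbar) := by
      simpa using hx.sub hdz
    have hbz : Tendsto (fun j => β (φ j + 1) • (x (φ j + 1) - x (φ j))) atTop (𝓝 0) := by
      refine squeeze_zero_norm (fun j => ?_) (tendsto_zero_iff_norm_tendsto_zero.1 hdz')
      rw [norm_smul, Real.norm_of_nonneg (hβ _).1]
      exact mul_le_of_le_one_left (norm_nonneg _) (hβ _).2.le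
    have hul : Tendsto (fun j => u (φ j + 1)) atTop (𝓝 xbar) := by
      simpa [husucc] using hx1.add hbz
    exact ⟨hx1, cluster_point hfc hf'c hP₂cont hP₁.2.2.1 (fun j => hp (φ j + 2))
      (fun j => hξ (φ j + 1)) (fun j => hv (φ j + 1)) hx hx1 hul hy
      (hζlim.comp ((tendsto_add_atTop_nat 1).comp hφ))⟩
  have hsubseq : ∀ φ : ℕ → ℕ, ∃ ψ : ℕ → ℕ, StrictMono ψ ∧ ∃ xbar ybar : Eucl n,
      Tendsto (fun j => x (φ (ψ j) + 2)) atTop (𝓝 xbar) ∧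
      Tendsto (fun j => ξ (φ (ψ j) + 2)) atTop (𝓝 ybar) := by
    intro φ
    have hmem : ∀ j, (x (φ j + 2), ξ (φ j + 2)) ∈
        closedBall (0 : Eucl n) R ×ˢ closedBall (0 : Eucl n) S := fun j =>
      ⟨by simpa using hR _, by simpa using hS _ _ (hR _) (hξ (φ j + 1))⟩
    obtain ⟨⟨xbar, ybar⟩, -, ψ, hψ, hlim⟩ :=
      tendsto_subseq_of_bounded (isBounded_closedBall.prod isBounded_closedBall) hmem
    exact ⟨ψ, hψ, xbar, ybar, (continuous_fst.tendsto _).comp hlim,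
      (continuous_snd.tendsto _).comp hlim⟩
  -- If no constant worked, a subsequence violating the bound with constants `m → ∞` would cluster
  -- at a point where the KL inequality supplies a fixed constant.
  have herr : ∃ m : ℕ, ∀ᶠ k in atTop, e (k + 1) - ζ ≤ m * (d (k + 1) ^ 2 + d k ^ 2) := by
    by_contra hcon
    push Not at hcon
    obtain ⟨φ, hφ, hbad⟩ := extraction_forall_of_frequently hcon
    obtain ⟨ψ, hψ, xbar, ybar, hx, hy⟩ := hsubseq φ
    have hφψ : Tendsto (fun j => φ (ψ j)) atTop atTop := hφ.tendsto_atTop.comp hψ.tendsto_atTop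
    obtain ⟨hx1, r, hr, hvr, hyr, hζr⟩ := hcluster _ _ _ hφψ hx hy
    obtain ⟨c, hc, ε, hε, a, ha, H⟩ :=
      kl_local_bound hL hfconv hfgrad hflip hKL hr hvr hyr hζr
    have hnear : Tendsto (fun j => ‖x (φ (ψ j) + 2) - xbar‖ + ‖ξ (φ (ψ j) + 2) - ybar‖
        + ‖x (φ (ψ j) + 1) - xbar‖) atTop (𝓝 0) := by
      have h1 := (tendsto_iff_norm_sub_tendsto_zero.1 hx).add
        (tendsto_iff_norm_sub_tendsto_zero.1 hy)
      simpa using h1.add (tendsto_iff_norm_sub_tendsto_zero.1 hx1)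
    have hel : Tendsto (fun j => e (φ (ψ j) + 1)) atTop (𝓝 ζ) :=
      hζlim.comp ((tendsto_add_atTop_nat 1).comp hφψ)
    have hcψ : ∀ᶠ j in atTop, c ≤ (ψ j : ℝ) :=
      (tendsto_natCast_atTop_atTop.comp hψ.tendsto_atTop).eventually_ge_atTop c
    obtain ⟨j, ⟨hj1, hj2⟩, hj3⟩ := (((hnear.eventually (ge_mem_nhds hε)).and
      (hel.eventually (gt_mem_nhds (lt_add_of_pos_right ζ ha)))).and hcψ).exists
    have hb := hbad (ψ j)
    have hnn : 0 ≤ d (φ (ψ j) + 1) ^ 2 + d (φ (ψ j)) ^ 2 := by positivity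
    have hgt : ζ < e (φ (ψ j) + 1) := by
      have : 0 ≤ (ψ j : ℝ) * (d (φ (ψ j) + 1) ^ 2 + d (φ (ψ j)) ^ 2) := by positivity
      linarith
    have h := H (x (φ (ψ j))) (x (φ (ψ j) + 1)) (x (φ (ψ j) + 2)) (ξ (φ (ψ j) + 2)) _ _ _
      (hp (φ (ψ j) + 2)) (hξ (φ (ψ j) + 1)) (hβ (φ (ψ j) + 1)) (husucc _) (hv (φ (ψ j) + 1))
      hj1 hgt hj2
    have h' : e (φ (ψ j) + 1) - ζ ≤ c * (d (φ (ψ j) + 1) ^ 2 + d (φ (ψ j)) ^ 2) := h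
    have := mul_le_mul_of_nonneg_right hj3 hnn
    linarith
  obtain ⟨m₀, hm₀⟩ := herr
  set C : ℝ := (m₀ + 1) / D with hCdef
  have hC : 0 < C := by positivity
  have hrec : ∀ᶠ k in atTop, e (k + 2) - ζ ≤ C * (e k - e (k + 2)) := by
    filter_upwards [hm₀] with k hk
    have h1 : e (k + 2) ≤ e (k + 1) := hanti (Nat.le_succ _)
    have h2 : D * (d (k + 1) ^ 2 + d k ^ 2) ≤ e k - e (k + 2) := by
      linarith [hdesc k, hdesc (k + 1)]
    have h3 : C * (D * (d (k + 1) ^ 2 + d k ^ 2)) ≤ C * (e k - e (k + 2)) := by gcongr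
    have h4 : C * (D * (d (k + 1) ^ 2 + d k ^ 2)) = (m₀ + 1) * (d (k + 1) ^ 2 + d k ^ 2) := by
      rw [hCdef]; field_simp
    nlinarith [sq_nonneg (d (k + 1)), sq_nonneg (d k)]
  obtain ⟨M, hM, q, hq, hrate⟩ := geometric_rate hD hC hdesc hζle hrec
  have hdist : ∀ k, dist (x k) (x (k + 1)) ≤ M * q ^ k := fun k => by
    rw [dist_comm, dist_eq_norm]
    exact (hrate k).2
  obtain ⟨xbar, hxbar⟩ := cauchySeq_tendsto_of_complete (cauchySeq_of_le_geometric q M hq.2 hdist)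
  have hstat : ∃ v₁ v₂ : Eucl n, ConvexSubgradAtE P₁ v₁ xbar ∧ ConvexSubgradAt P₂ v₂ xbar ∧
      f' xbar + v₁ - v₂ = 0 := by
    obtain ⟨ψ, hψ, x', ybar, hx', hy'⟩ := hsubseq id
    have hx'' : x' = xbar := tendsto_nhds_unique hx'
      (hxbar.comp ((tendsto_add_atTop_nat 2).comp hψ.tendsto_atTop))
    subst hx''
    obtain ⟨-, r, -, hvr, hyr, -⟩ := hcluster _ _ _ hψ.tendsto_atTop hx' hy'
    exact ⟨_, _, hvr, hyr, by abel⟩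
  refine ⟨ζ, xbar, ?_, hstat, hxbar, ?_, C, hC, ?_⟩
  · rw [← tendsto_add_atTop_iff_nat 1]
    refine ((continuous_coe_real_ereal.tendsto ζ).comp hζlim).congr fun k => ?_
    exact (hpot k).symm
  · -- The potential value with index `k ≥ 1` is `e (k - 1)`, hence the factor `q⁻¹`.
    have h1q : 0 < 1 - q := by linarith [hq.2]
    have hq0 := hq.1
    refine ⟨M / q + M / (1 - q), by positivity, q, hq, fun k hk => ?_, fun k => ?_⟩
    · obtain ⟨j, rfl⟩ : ∃ j, k = j + 1 := ⟨k - 1, by omega⟩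
      refine ⟨e j, hpot j, ?_⟩
      rw [abs_of_nonneg (by linarith [hζle j])]
      calc e j - ζ ≤ M * q ^ j := (hrate j).1
        _ = M / q * q ^ (j + 1) := by rw [pow_succ]; field_simp
        _ ≤ _ := by gcongr; linarith [div_pos hM h1q]
    · have h := dist_le_of_le_geometric_of_tendsto q M hq.2 hdist hxbar k
      rw [dist_eq_norm] at h
      calc ‖x k - xbar‖ ≤ M * q ^ k / (1 - q) := h
        _ = M / (1 - q) * q ^ k := by ring
        _ ≤ _ := by gcongr; linarith [div_pos hM hq0]
  · obtain ⟨N, hN⟩ := eventually_atTop.1 hrec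
    refine eventually_atTop.2 ⟨N + 2, fun k hk => ?_⟩
    obtain ⟨j, rfl⟩ : ∃ j, k = j + 2 := ⟨k - 2, by omega⟩
    have h1 : potE f P₁ P₂ L (x (j + 2 - 1)) (ξ (j + 2 - 1)) (x (j + 2 - 2)) = (e j : EReal) :=
      hpot j
    rw [hpot, h1]
    exact_mod_cast hN j (by omega)
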